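/- arXiv:1012.1495 — 2 statements merged into one kernel-verified Lean document; each statement's English description precedes it below -/
import Mathlib

section
/- If P is a rational convex polygon without parallel edges, then every forward orbit of the outer billiard map T about P is periodic: for every forward orbit (M_k)_{k∈ℕ} there exists p ≥ 1 such that M_p = M_0 (and hence M_{k+p} = M_k for all k). -/
open MeasureTheory

/-- The planar wedge (cross) product: `u ∧ v = uₓ v_y − u_y vₓ`. -/
def wedge (u v : ℝ × ℝ) : ℝ := u.1 * v.2 - u.2 * v.1

/-- The angle in `[0, π)` of the line directed by the nonzero vector `u`. -/
noncomputable def lineAngle (u : ℝ × ℝ) : ℝ :=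
  let θ := Complex.arg ⟨u.1, u.2⟩
  if θ < 0 then θ + Real.pi else if θ = Real.pi then 0 else θ

/-- A finite family of real numbers is commensurate if they are all nonzero and all
pairwise ratios are rational. -/
def Commensurate {m : ℕ} (α : Fin m → ℝ) : Prop :=
  (∀ i, α i ≠ 0) ∧ ∀ i j, ∃ q : ℚ, α i = (q : ℝ) * α j

/-- A convex polygon in the plane with `n ≥ 3` vertices listed in counterclockwise order,
no three vertices collinear, no two edges parallel, together with the data describing
the slope ordering of its edges and, for each edge, the (unique) vertex farthest from
its supporting line.  Edge `i` (in slope order) is the segment from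
`vertex (σ i)` to `vertex (σ i + 1)`. -/
structure ConvexPolygonSpokes (n : ℕ) [NeZero n] where
  three_le : 3 ≤ n
  vertex : Fin n → ℝ × ℝ
  /-- every vertex lies strictly to the left of each directed edge: this encodes
  convexity, the counterclockwise orientation, and that no three vertices are collinear -/
  convex_ccw : ∀ i j : Fin n, j ≠ i → j ≠ i + 1 →
    0 < wedge (vertex (i + 1) - vertex i) (vertex j - vertex i)
  /-- no two edges are parallel -/
  no_parallel : ∀ i j : Fin n, i ≠ j →
    wedge (vertex (i + 1) - vertex i) (vertex (j + 1) - vertex j) ≠ 0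
  /-- the permutation re-indexing the edges by slope -/
  σ : Equiv.Perm (Fin n)
  /-- the angles in `[0, π)` of the supporting lines are strictly increasing in slope order -/
  slope_sorted : StrictMono fun i : Fin n => lineAngle (vertex (σ i + 1) - vertex (σ i))
  /-- index of the vertex of the polygon farthest (in Euclidean distance, equivalently in
  the absolute wedge with the edge direction) from the supporting line of the `i`-th edge -/
  wIdx : Fin n → Fin n
  wIdx_farthest : ∀ i j : Fin n, j ≠ wIdx i →
    |wedge (vertex (σ i + 1) - vertex (σ i)) (vertex j - vertex (σ i))| <
    |wedge (vertex (σ i + 1) - vertex (σ i)) (vertex (wIdx i) - vertex (σ i))|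

namespace ConvexPolygonSpokes

variable {n : ℕ} [NeZero n] (P : ConvexPolygonSpokes n)

/-- Direction vector of the `i`-th edge (in slope order). -/
def dir (i : Fin n) : ℝ × ℝ := P.vertex (P.σ i + 1) - P.vertex (P.σ i)

/-- `v i`: the second endpoint of the `i`-th edge in the counterclockwise traversal. -/
def v (i : Fin n) : ℝ × ℝ := P.vertex (P.σ i + 1)

/-- `w i`: the vertex farthest from the supporting line of the `i`-th edge. -/
def w (i : Fin n) : ℝ × ℝ := P.vertex (P.wIdx i)

/-- The spoke vector of the `i`-th edge: `a i = 2 (w i − v i)`. -/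
def a (i : Fin n) : ℝ × ℝ := (2 : ℝ) • (P.w i - P.v i)

/-- `d i`: the unique vector parallel to edge `i` such that `a i + d i` is parallel to
edge `i+1` (written explicitly; it exists and is unique since edges `i` and `i+1`
are not parallel). -/
noncomputable def d (i : Fin n) : ℝ × ℝ :=
  (-(wedge (P.dir (i + 1)) (P.a i)) / wedge (P.dir (i + 1)) (P.dir i)) • P.dir i

/-- The polygon (as a convex body): the convex hull of its vertices. -/
def polygon : Set (ℝ × ℝ) := convexHull ℝ (Set.range P.vertex)

/-- The closed strip bounded by the supporting line of the `i`-th edge and the parallel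
line through the vertex `w i` farthest from it. -/
def strip (i : Fin n) : Set (ℝ × ℝ) :=
  {p | 0 ≤ wedge (P.dir i) (p - P.vertex (P.σ i)) ∧
    wedge (P.dir i) (p - P.vertex (P.σ i)) ≤ wedge (P.dir i) (P.w i - P.vertex (P.σ i))}

/-- `OBStep M N` holds when the outer billiard map is defined at `M ∈ ℝ² ∖ P` — i.e. there
is a vertex `A` of `P` with `(A − M) ∧ (p − M) ≤ 0` for all `p ∈ P`, with equality only
for `p = A` — and `N = 2A − M` is the image of `M`. -/
def OBStep (M N : ℝ × ℝ) : Prop :=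
  M ∉ P.polygon ∧ ∃ k : Fin n,
    (∀ p ∈ P.polygon, wedge (P.vertex k - M) (p - M) ≤ 0) ∧
    (∀ p ∈ P.polygon, wedge (P.vertex k - M) (p - M) = 0 → p = P.vertex k) ∧
    N = (2 : ℝ) • P.vertex k - M

/-- A forward orbit of the outer billiard map. -/
def IsOrbit (M : ℕ → ℝ × ℝ) : Prop := ∀ k : ℕ, P.OBStep (M k) (M (k + 1))

/-- `P` is quasi-rational: the numbers `|a i ∧ a (i+1)|` are nonzero and commensurate. -/
def QuasiRational : Prop :=
  Commensurate fun i : Fin n => |wedge (P.a i) (P.a (i + 1))|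

/-- `P` is rational: all its vertices lie on a lattice of `ℝ²`. -/
def Rational : Prop :=
  ∃ b₁ b₂ : ℝ × ℝ, LinearIndependent ℝ ![b₁, b₂] ∧
    ∀ k : Fin n, ∃ m l : ℤ, P.vertex k = (m : ℝ) • b₁ + (l : ℝ) • b₂

/-- The system `d₁ + a₁ + t₂ a₂ + ⋯ + t_{i−1} a_{i−1} = t_i d_i` (for `i = 2, …, n`),
`d₁ + a₁ + t₂ a₂ + ⋯ + t_n a_n = −d₁` has a rational solution `(t₂, …, t_n)`
(indices shifted down by one: paper index `i` is `Fin`-index `i − 1`). -/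
def SystemHasRatSolution : Prop :=
  ∃ t : Fin n → ℚ,
    (∀ i : Fin n, 0 < i →
      P.d 0 + P.a 0 + ∑ j ∈ Finset.Ioo 0 i, (t j : ℝ) • P.a j = (t i : ℝ) • P.d i) ∧
    P.d 0 + P.a 0 + ∑ j ∈ Finset.Ioi (0 : Fin n), (t j : ℝ) • P.a j = - P.d 0

end ConvexPolygonSpokes

namespace OBAux

lemma plucker (s p c a : ℝ × ℝ) :
    wedge s p * wedge c a = wedge s a * wedge c p + wedge s c * wedge p a := by
  simp only [wedge]; ring

lemma wedge_add_left (u v w : ℝ × ℝ) : wedge (u + v) w = wedge u w + wedge v w := by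
  simp [wedge]; ring

lemma wedge_sub_left (u v w : ℝ × ℝ) : wedge (u - v) w = wedge u w - wedge v w := by
  simp [wedge]; ring

lemma wedge_smul_left (t : ℝ) (u w : ℝ × ℝ) : wedge (t • u) w = t * wedge u w := by
  simp [wedge]; ring

lemma wedge_add_right (u v w : ℝ × ℝ) : wedge w (u + v) = wedge w u + wedge w v := by
  simp [wedge]; ring

lemma wedge_sub_right (u v w : ℝ × ℝ) : wedge w (u - v) = wedge w u - wedge w v := by
  simp [wedge]; ring

lemma wedge_smul_right (t : ℝ) (u w : ℝ × ℝ) : wedge w (t • u) = t * wedge w u := by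
  simp [wedge]; ring

lemma wedge_self (u : ℝ × ℝ) : wedge u u = 0 := by
  simp [wedge]; ring

lemma wedge_swap (u w : ℝ × ℝ) : wedge u w = - wedge w u := by
  simp [wedge]; ring

/-- Two vectors with the same wedge against two independent vectors agree. -/
lemma eq_of_wedge {x y e f : ℝ × ℝ} (hef : wedge e f ≠ 0) (h1 : wedge x e = wedge y e)
    (h2 : wedge x f = wedge y f) : x = y := by
  simp only [wedge] at *
  have k1 : (x.1 - y.1) * (e.1 * f.2 - e.2 * f.1) = 0 := by
    linear_combination (-f.1) * h1 + e.1 * h2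
  have k2 : (x.2 - y.2) * (e.1 * f.2 - e.2 * f.1) = 0 := by
    linear_combination (-f.2) * h1 + e.2 * h2
  rcases mul_eq_zero.1 k1 with k1 | k1
  · rcases mul_eq_zero.1 k2 with k2 | k2
    · exact Prod.ext (by linarith) (by linarith)
    · exact absurd k2 hef
  · exact absurd k1 hef

lemma int_le {x y D : ℝ} (hD : 0 < D) (hx : ∃ z : ℤ, x = z * D) (hy : ∃ z : ℤ, y = z * D)
    (h : x < y + D) : x ≤ y := by
  obtain ⟨a, rfl⟩ := hx
  obtain ⟨b, rfl⟩ := hy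
  have h1 : (a : ℝ) < b + 1 := by
    by_contra hc
    push Not at hc
    nlinarith
  have h2 : a < b + 1 := by exact_mod_cast h1
  have h3 : (a : ℝ) ≤ b := by exact_mod_cast Int.lt_add_one_iff.1 h2
  exact mul_le_mul_of_nonneg_right h3 hD.le

variable {n : ℕ}

/-- The candidate corners at level `h`. -/
def Cand (v : Fin n → ℝ × ℝ) (h : ℝ) (U : ℝ × ℝ) : Prop :=
  ∃ i j k l, wedge (v j - v i) (v l - v k) ≠ 0 ∧
    U = (h / wedge (v j - v i) (v l - v k)) • (v j - v i)

/-- Good offsets of beads. -/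
def Good (v : Fin n → ℝ × ℝ) (h : ℝ) (s : ℝ × ℝ) : Prop :=
  (∀ i j, wedge s (v j - v i) ≤ h) ∧ (∃ i j, wedge s (v j - v i) = h) ∧
  ∀ i j, wedge s (v j - v i) = h → ∀ U, Cand v h U → wedge U (v j - v i) = h →
    ∃ z : ℤ, U = s + (2 * (z : ℝ)) • (v j - v i)

/-- Standing assumptions. -/
structure Setup (v : Fin n → ℝ × ℝ) (D B h : ℝ) : Prop where
  hD : 0 < D
  hDB : D ≤ B
  hInt : ∀ i j k l, ∃ z : ℤ, wedge (v j - v i) (v l - v k) = z * D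
  hB : ∀ i j k l, |wedge (v j - v i) (v l - v k)| ≤ B
  hh : 4 * B * B < h * D
  hdiv : ∀ U U', Cand v h U → Cand v h U' → ∀ k l, wedge U (v l - v k) = h →
    wedge U' (v l - v k) = h → ∃ z : ℤ, U' = U + (2 * (z : ℝ)) • (v l - v k)

/-- One step of the outer billiard map, through vertices only. -/
def St (v : Fin n → ℝ × ℝ) (x y : ℝ × ℝ) : Prop :=
  ∃ k, (∀ i, wedge (v k - x) (v i - x) ≤ 0) ∧
    (∀ i, wedge (v k - x) (v i - x) = 0 → v i = v k) ∧ y = (2 : ℝ) • v k - x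

lemma St_cone {v : Fin n → ℝ × ℝ} {x y : ℝ × ℝ} (hs : St v x y) (A : Fin n)
    (hA : ∀ i, 0 ≤ wedge (x - v A) (v i - v A)) : y = (2 : ℝ) • v A - x := by
  obtain ⟨k, h1, h2, rfl⟩ := hs
  have e : wedge (v k - x) (v A - x) = wedge (x - v A) (v k - v A) := by
    simp [wedge]; ring
  have : v A = v k := h2 A (le_antisymm (h1 A) (e ▸ hA k))
  rw [this]

lemma St_inj {v : Fin n → ℝ × ℝ} {x x' y : ℝ × ℝ} (hs : St v x y) (hs' : St v x' y) :
    x = x' := by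
  obtain ⟨k, h1, h2, e1⟩ := hs
  obtain ⟨k', h1', h2', e2⟩ := hs'
  have ex : x = (2 : ℝ) • v k - y := by rw [e1]; simp
  have ex' : x' = (2 : ℝ) • v k' - y := by rw [e2]; simp
  have a1 := h1 k'
  have a2 := h1' k
  have e : wedge (v k - x) (v k' - x) = - wedge (v k' - x') (v k - x') := by
    rw [ex, ex']; simp [wedge]; ring
  have : v k' = v k := h2 k' (by linarith)
  rw [ex, ex', this]

lemma hull_ge {v : Fin n → ℝ × ℝ} {p c : ℝ × ℝ} {t : ℝ}
    (hp : p ∈ convexHull ℝ (Set.range v)) (h : ∀ i, t ≤ wedge (v i) c) : t ≤ wedge p c := by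
  have hc : Convex ℝ {p : ℝ × ℝ | t ≤ wedge p c} := by
    intro x hx y hy a b ha hb hab
    change t ≤ wedge x c at hx
    change t ≤ wedge y c at hy
    change t ≤ wedge (a • x + b • y) c
    rw [wedge_add_left, wedge_smul_left, wedge_smul_left]
    have e1 := mul_le_mul_of_nonneg_left hx ha
    have e2 := mul_le_mul_of_nonneg_left hy hb
    have e3 : a * t + b * t = t := by rw [← add_mul, hab, one_mul]
    linarith
  exact convexHull_min (by rintro _ ⟨i, rfl⟩; exact h i) hc hp

/-- Tie-broken extremal vertex. -/
lemma exists_min [NeZero n] (f g : Fin n → ℝ) :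
    ∃ A, ∀ i, f A ≤ f i ∧ (f A = f i → g A ≤ g i) := by
  obtain ⟨A, -, hA⟩ := Finset.exists_min_image Finset.univ
    (fun i => toLex (f i, g i)) ⟨0, Finset.mem_univ _⟩
  refine ⟨A, fun i => ?_⟩
  have := hA i (Finset.mem_univ _)
  rw [Prod.Lex.toLex_le_toLex] at this
  rcases this with h | ⟨h1, h2⟩
  · exact ⟨h.le, fun e => absurd e h.ne⟩
  · exact ⟨h1.le, fun _ => h2⟩

/-- Leaving the inside region lands in a corner bead. -/
lemma exit_bead {v : Fin n → ℝ × ℝ} {D B h : ℝ} (S : Setup v D B h) {x z : ℝ × ℝ}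
    (hI : ∀ i j, wedge (v i - x) (v j - x) ≤ h) (hs : St v x z)
    (hO : ¬ ∀ i j, wedge (v i - z) (v j - z) ≤ h) :
    ∃ s, Good v h s ∧ ∃ p ∈ convexHull ℝ (Set.range v), z = p + s := by
  obtain ⟨k, hk, -, rfl⟩ := hs
  push Not at hO
  obtain ⟨m, l, hv⟩ := hO
  obtain ⟨hD, hDB, hInt, hB, hh, hdiv⟩ := S
  -- c = v m - v k, b = v l - v k
  set y := x - v k with hy
  have yk : ∀ i, 0 ≤ wedge y (v i - v k) := fun i => by
    have := hk i
    have e : wedge (v k - x) (v i - x) = - wedge y (v i - v k) := by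
      simp [wedge, hy]; ring
    linarith
  have yh : ∀ i, wedge y (v i - v k) ≤ h := fun i => by
    have := hI i k
    have e : wedge (v i - x) (v k - x) = wedge y (v i - v k) := by
      simp [wedge, hy]; ring
    linarith
  set c := v m - v k with hc
  set b := v l - v k with hb
  have hv' : h < wedge y b - wedge y c + wedge c b := by
    have e : wedge (v m - ((2 : ℝ) • v k - x)) (v l - ((2 : ℝ) • v k - x))
      = wedge y b - wedge y c + wedge c b := by
      simp [wedge, hy, hc, hb]; ring
    linarith
  have hI' : wedge y b - wedge y c - wedge c b ≤ h := by
    have := hI l m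
    have e : wedge (v l - x) (v m - x) = wedge y b - wedge y c - wedge c b := by
      simp [wedge, hy, hc, hb]; ring
    linarith
  have cb : 0 < wedge c b := by linarith
  have ycb : wedge y c < wedge c b := by have := yh l; linarith
  have cbB : wedge c b ≤ B := le_trans (le_abs_self _) (hB k m k l)
  have yc0 : 0 ≤ wedge y c := yk m
  have ybB : h - B < wedge y b := by linarith
  have hB0 : 0 < B := by linarith
  have hhB : 4 * B < h := by
    by_contra hcon
    push Not at hcon
    nlinarith
  have c0 : ∀ i, 0 ≤ wedge c (v i - v k) := fun i => by
    have pl := plucker y (v i - v k) c b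
    have pb := abs_le.1 (hB k i k l)
    have y0 := yk i
    refine int_le hD ⟨0, by simp⟩ (hInt k m k i) ?_
    by_contra hcon
    push Not at hcon
    change wedge c (v i - v k) + D ≤ 0 at hcon
    have q2 : wedge y c * wedge (v i - v k) b ≤ B * B := by
      have := pb.2
      change wedge (v i - v k) b ≤ B at this
      nlinarith
    have q1 : wedge y b * (wedge c (v i - v k) + D) ≤ 0 :=
      mul_nonpos_of_nonneg_of_nonpos (by linarith) hcon
    nlinarith [mul_nonneg y0 cb.le]
  have c1 : ∀ i, wedge c (v i - v k) ≤ wedge c b := fun i => by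
    have pl := plucker y (v i - v k) c b
    have pb := abs_le.1 (hB k i k l)
    have y0 := yh i
    refine int_le hD (hInt k m k i) (hInt k m k l) ?_
    by_contra hcon
    push Not at hcon
    change wedge c b + D ≤ wedge c (v i - v k) at hcon
    have q1 : wedge y b * (wedge c b + D) ≤ wedge y b * wedge c (v i - v k) :=
      mul_le_mul_of_nonneg_left hcon (by linarith)
    have q2 : wedge y (v i - v k) * wedge c b ≤ h * wedge c b :=
      mul_le_mul_of_nonneg_right y0 cb.le
    have q3 : - (B * B) ≤ wedge y c * wedge (v i - v k) b := by
      have := pb.1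
      change -B ≤ wedge (v i - v k) b at this
      nlinarith
    have q4 : (h - B) * (wedge c b + D) ≤ wedge y b * (wedge c b + D) :=
      mul_le_mul_of_nonneg_right ybB.le (by linarith)
    nlinarith
  set U : ℝ × ℝ := (h / wedge c (v k - v l)) • c with hU
  have ckl : wedge c (v k - v l) = - wedge c b := by
    simp [wedge, hb]; ring
  have hCand : Cand v h U := ⟨k, m, l, k, by rw [← hc, ckl]; linarith, by rw [← hc]⟩
  have hUw : ∀ u, wedge U u = - (h / wedge c b) * wedge c u := fun u => by
    rw [hU, wedge_smul_left, ckl, div_neg]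
  have hUb : wedge U b = - h := by rw [hUw]; field_simp
  refine ⟨U, ⟨?_, ⟨l, k, ?_⟩, ?_⟩, (2 : ℝ) • v k - x - U, ?_, by simp⟩
  · intro i j
    rw [hUw]
    have e : wedge c (v j - v i) = wedge c (v j - v k) - wedge c (v i - v k) := by
      simp [wedge]; ring
    have := c0 j
    have := c1 i
    have h2 : - wedge c b ≤ wedge c (v j - v i) := by linarith
    have h3 : 0 ≤ h / wedge c b := div_nonneg (by linarith) cb.le
    have := mul_le_mul_of_nonneg_left h2 h3
    have e2 : h / wedge c b * (- wedge c b) = - h := by field_simp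
    linarith
  · have : v k - v l = - b := by simp [hb]
    rw [hUw, ckl]; field_simp
  · intro i j hij W hW hWij
    exact hdiv U W hCand hW i j hij hWij
  · have key : (2 : ℝ) • v k - x - U = (1 - wedge y c / wedge c b - (h - wedge y b) / wedge c b) • v k
        + (wedge y c / wedge c b) • v l + ((h - wedge y b) / wedge c b) • v m := by
      refine eq_of_wedge (e := c) (f := b) cb.ne' ?_ ?_
      · have e1 : wedge ((2 : ℝ) • v k - x - U) c = wedge (v k) c - wedge y c := by
          rw [wedge_sub_left, hUw, wedge_self, hy]; simp [wedge]; ring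
        have e2 : (1 - wedge y c / wedge c b - (h - wedge y b) / wedge c b) • v k
          + (wedge y c / wedge c b) • v l + ((h - wedge y b) / wedge c b) • v m
          = v k + (wedge y c / wedge c b) • b + ((h - wedge y b) / wedge c b) • c := by
          rw [hb, hc]; module
        rw [e1, e2, wedge_add_left, wedge_add_left, wedge_smul_left, wedge_smul_left, wedge_self,
          wedge_swap b c]
        field_simp
        ring
      · have e1 : wedge ((2 : ℝ) • v k - x - U) b = wedge (v k) b - wedge y b + h := by
          rw [wedge_sub_left, hUb, hy]; simp [wedge]; ring
        have e2 : (1 - wedge y c / wedge c b - (h - wedge y b) / wedge c b) • v k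
          + (wedge y c / wedge c b) • v l + ((h - wedge y b) / wedge c b) • v m
          = v k + (wedge y c / wedge c b) • b + ((h - wedge y b) / wedge c b) • c := by
          rw [hb, hc]; module
        rw [e1, e2, wedge_add_left, wedge_add_left, wedge_smul_left, wedge_smul_left, wedge_self]
        field_simp
        ring
    rw [key]
    have hcv := convex_convexHull ℝ (Set.range v)
    have mem : ∀ i, v i ∈ convexHull ℝ (Set.range v) :=
      fun i => subset_convexHull ℝ _ ⟨i, rfl⟩
    have t1 : 0 ≤ wedge y c / wedge c b := div_nonneg yc0 cb.le
    have t2 : 0 ≤ (h - wedge y b) / wedge c b := div_nonneg (by have := yh l; linarith) cb.le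
    have t3 : wedge y c / wedge c b + (h - wedge y b) / wedge c b ≤ 1 := by
      rw [← add_div, div_le_one cb]; linarith
    have := hcv.sum_mem (t := Finset.univ)
      (w := ![1 - wedge y c / wedge c b - (h - wedge y b) / wedge c b,
        wedge y c / wedge c b, (h - wedge y b) / wedge c b]) (z := ![v k, v l, v m])
      (by intro i _; fin_cases i <;> simp <;> linarith)
      (by simp [Fin.sum_univ_three]; ring)
      (by intro i _; fin_cases i <;> simp [mem])
    simpa [Fin.sum_univ_three] using this

set_option maxHeartbeats 4000000 in
/-- Beads move to beads under two steps. -/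
lemma bead_step [NeZero n] {v : Fin n → ℝ × ℝ} {D B h : ℝ} (S : Setup v D B h)
    {s p y z : ℝ × ℝ} (hG : Good v h s) (hp : p ∈ convexHull ℝ (Set.range v))
    (h1 : St v (p + s) y) (h2 : St v y z) :
    ∃ s', Good v h s' ∧ z = p + s' := by
  obtain ⟨hD, hDB, hInt, hB, hh, hdiv⟩ := S
  obtain ⟨g1, ⟨i0, j0, g2⟩, g3⟩ := hG
  have hB0 : 0 < B := by linarith
  have hhB : 4 * B < h := by
    by_contra hcon
    push Not at hcon
    nlinarith
  obtain ⟨A, hA⟩ := exists_min (fun i => wedge s (v i))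
    (fun i => - (s.1 * (v i).1 + s.2 * (v i).2))
  obtain ⟨A', hA'⟩ := exists_min (fun i => - wedge s (v i))
    (fun i => (s.1 * (v i).1 + s.2 * (v i).2))
  set a := v A' - v A with ha
  have A0 : ∀ i, 0 ≤ wedge s (v i - v A) := fun i => by
    have := (hA i).1; simp only [wedge_sub_right] at *; linarith
  have A'0 : ∀ i, wedge s (v i - v A') ≤ 0 := fun i => by
    have := (hA' i).1; simp only [wedge_sub_right] at *; linarith
  have sa : wedge s a = h := by
    refine le_antisymm (g1 _ _) ?_
    have := A0 i0
    have := A'0 j0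
    simp only [ha, wedge_sub_right] at *
    linarith
  -- corner analysis
  have corner : ∀ i k, wedge (v i - v k) a ≠ 0 → ∃ z : ℤ,
      (h / wedge (v i - v k) a) • (v i - v k) = s + (2 * (z : ℝ)) • a ∧
      wedge s (v i - v k) = 2 * z * wedge (v i - v k) a := fun i k hne => by
    obtain ⟨z, hz⟩ := g3 A A' sa ((h / wedge (v i - v k) a) • (v i - v k))
      ⟨k, i, A, A', hne, rfl⟩ (by rw [wedge_smul_left, ← ha]; field_simp)
    refine ⟨z, hz, ?_⟩
    have := congrArg (fun u => wedge u (v i - v k)) hz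
    simp only [wedge_smul_left, wedge_add_left, wedge_self] at this
    rw [wedge_swap (v A' - v A)] at this
    rw [ha]; linarith
  have h0 : 0 < h := by linarith
  have tieA : ∀ i, 0 < wedge (v i - v A) a → 0 < wedge s (v i - v A) ∧
      2 * wedge (v i - v A) a ≤ wedge s (v i - v A) := fun i hi => by
    obtain ⟨z, hz, hw⟩ := corner i A hi.ne'
    have n0 := A0 i
    have z0 : 0 ≤ z := by
      by_contra hc
      push Not at hc
      have : (z : ℝ) < 0 := by exact_mod_cast hc
      nlinarith
    have z1 : z ≠ 0 := by
      rintro rfl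
      simp only [Int.cast_zero, mul_zero, zero_smul, add_zero, zero_mul] at hz hw
      have t := (hA i).2 (by simp only [wedge_sub_right] at hw; linarith)
      have lam : 0 < h / wedge (v i - v A) a := div_pos h0 hi
      have e1 : s.1 = h / wedge (v i - v A) a * ((v i).1 - (v A).1) := by rw [← hz]; simp
      have e2 : s.2 = h / wedge (v i - v A) a * ((v i).2 - (v A).2) := by rw [← hz]; simp
      have e3 : h / wedge (v i - v A) a * (((v i).1 - (v A).1) ^ 2 + ((v i).2 - (v A).2) ^ 2) ≤ 0 := by
        have : s.1 * ((v i).1 - (v A).1) + s.2 * ((v i).2 - (v A).2) ≤ 0 := by linarith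
        rw [e1, e2] at this
        linarith
      have e4 : ((v i).1 - (v A).1) ^ 2 + ((v i).2 - (v A).2) ^ 2 ≤ 0 := by
        by_contra hc
        push Not at hc
        have := mul_pos lam hc
        linarith
      have e5 : (v i).1 - (v A).1 = 0 := by nlinarith [sq_nonneg ((v i).1 - (v A).1), sq_nonneg ((v i).2 - (v A).2)]
      have e6 : (v i).2 - (v A).2 = 0 := by nlinarith [sq_nonneg ((v i).1 - (v A).1), sq_nonneg ((v i).2 - (v A).2)]
      simp [wedge, e5, e6] at hi
    have z2 : (1 : ℝ) ≤ z := by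
      have : 1 ≤ z := by omega
      exact_mod_cast this
    constructor <;> rw [hw] <;> nlinarith
  have tieA' : ∀ i, wedge (v i - v A') a < 0 →
      wedge s (v i - v A') ≤ 2 * wedge (v i - v A') a := fun i hi => by
    obtain ⟨z, hz, hw⟩ := corner i A' hi.ne
    have n0 := A'0 i
    have z0 : 0 ≤ z := by
      by_contra hc
      push Not at hc
      have : (z : ℝ) < 0 := by exact_mod_cast hc
      nlinarith
    have z1 : z ≠ 0 := by
      rintro rfl
      simp only [Int.cast_zero, mul_zero, zero_smul, add_zero, zero_mul] at hz hw
      have t := (hA' i).2 (by simp only [wedge_sub_right] at hw; linarith)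
      have lam : h / wedge (v i - v A') a < 0 := div_neg_of_pos_of_neg h0 hi
      have e1 : s.1 = h / wedge (v i - v A') a * ((v i).1 - (v A').1) := by rw [← hz]; simp
      have e2 : s.2 = h / wedge (v i - v A') a * ((v i).2 - (v A').2) := by rw [← hz]; simp
      have e3 : 0 ≤ h / wedge (v i - v A') a * (((v i).1 - (v A').1) ^ 2 + ((v i).2 - (v A').2) ^ 2) := by
        have : 0 ≤ s.1 * ((v i).1 - (v A').1) + s.2 * ((v i).2 - (v A').2) := by linarith
        rw [e1, e2] at this
        linarith
      have e4 : ((v i).1 - (v A').1) ^ 2 + ((v i).2 - (v A').2) ^ 2 ≤ 0 := by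
        by_contra hc
        push Not at hc
        have := mul_neg_of_neg_of_pos lam hc
        linarith
      have e5 : (v i).1 - (v A').1 = 0 := by nlinarith [sq_nonneg ((v i).1 - (v A').1), sq_nonneg ((v i).2 - (v A').2)]
      have e6 : (v i).2 - (v A').2 = 0 := by nlinarith [sq_nonneg ((v i).1 - (v A').1), sq_nonneg ((v i).2 - (v A').2)]
      simp [wedge, e5, e6] at hi
    have z2 : (1 : ℝ) ≤ z := by
      have : 1 ≤ z := by omega
      exact_mod_cast this
    rw [hw]; nlinarith
  -- first step
  have step1 : y = (2 : ℝ) • v A - (p + s) := by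
    refine St_cone h1 A fun q => ?_
    suffices hk : wedge (v A) (v q - v A) - wedge s (v q - v A) ≤ wedge p (v q - v A) by
      rw [wedge_sub_left, wedge_add_left]; linarith
    refine hull_ge hp fun i => ?_
    by_contra hcon
    push Not at hcon
    have e : wedge (v q - v A) (v i - v A) = wedge (v A) (v q - v A) - wedge (v i) (v q - v A) := by
      simp [wedge]; ring
    have k0 := A0 q
    have w1 : wedge s (v q - v A) < wedge (v q - v A) (v i - v A) := by linarith
    have wB := abs_le.1 (hB A q A i)
    have pB := abs_le.1 (hB A i A A')
    have pl := plucker s (v i - v A) (v q - v A) a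
    rw [sa] at pl
    have s0 := A0 i
    have s1 := g1 A i
    have wD : D ≤ wedge (v q - v A) (v i - v A) := by
      by_contra hc
      push Not at hc
      have := int_le hD (hInt A q A i) ⟨0, by simp⟩ (y := 0) (by linarith)
      linarith
    rw [← ha] at pB
    have kp : - (B * B) ≤ wedge s (v q - v A) * wedge (v i - v A) a := by nlinarith
    have ca : 0 < wedge (v q - v A) a := by
      by_contra hc
      push Not at hc
      nlinarith [mul_nonneg s0 (neg_nonneg.2 hc), mul_le_mul_of_nonneg_left wD h0.le]
    have cle : wedge (v q - v A) (v i - v A) ≤ wedge (v q - v A) a := by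
      refine int_le hD (hInt A q A i) (hInt A q A A') ?_
      by_contra hc
      push Not at hc
      nlinarith [mul_le_mul_of_nonneg_right s1 ca.le, mul_le_mul_of_nonneg_left hc h0.le]
    have := (tieA q ca).2
    linarith
  have step2 : z = (2 : ℝ) • v A' - y := by
    refine St_cone h2 A' fun q => ?_
    rw [step1]
    suffices hk : ∀ i, 0 ≤ wedge ((2 : ℝ) • v A - (v i + s) - v A') (v q - v A') by
      have e : ∀ r : ℝ × ℝ, wedge ((2 : ℝ) • v A - (r + s) - v A') (v q - v A')
        = wedge r (-(v q - v A')) + wedge ((2 : ℝ) • v A - s - v A') (v q - v A') := fun r => by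
        simp [wedge]; ring
      have := hull_ge (c := -(v q - v A'))
        (t := - wedge ((2 : ℝ) • v A - s - v A') (v q - v A')) hp
        (fun i => by have := hk i; rw [e] at this; linarith)
      rw [e]; linarith
    intro i
    by_contra hcon
    push Not at hcon
    have e : wedge ((2 : ℝ) • v A - (v i + s) - v A') (v q - v A')
      = - wedge s (v q - v A') + 2 * wedge (v q - v A') a + wedge (v q - v A') (v i - v A') := by
      simp [wedge, ha]; ring
    rw [e] at hcon
    have k0 := A'0 q
    have wB := abs_le.1 (hB A' q A' i)
    have cB := abs_le.1 (hB A' q A A')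
    have pB := abs_le.1 (hB A' i A A')
    have pl := plucker s (v i - v A') (v q - v A') a
    rw [sa] at pl
    rw [← ha] at pB cB
    have s0 := A'0 i
    have s1 : -h ≤ wedge s (v i - v A') := by
      have := g1 i A'
      simp only [wedge_sub_right] at *
      linarith
    have kp : |wedge s (v q - v A') * wedge (v i - v A') a| ≤ 3 * B * B := by
      rw [abs_mul]
      refine mul_le_mul ?_ (abs_le.2 pB) (abs_nonneg _) (by linarith)
      rw [abs_le]; constructor <;> linarith
    have kp := abs_le.1 kp
    rcases lt_or_ge (wedge (v q - v A') a) 0 with ca | ca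
    · have t := tieA' q ca
      have : 0 ≤ wedge (v q - v A') (v i - v A') := by
        refine int_le hD ⟨0, by simp⟩ (hInt A' q A' i) ?_
        by_contra hc
        push Not at hc
        nlinarith [mul_nonneg_of_nonpos_of_nonpos s0 ca.le]
      linarith
    · have : - wedge (v q - v A') a ≤ wedge (v q - v A') (v i - v A') := by
        refine int_le hD ?_ (hInt A' q A' i) ?_
        · obtain ⟨w, hw⟩ := hInt A' q A A'
          exact ⟨-w, by rw [ha, hw]; push_cast; ring⟩
        · by_contra hc
          push Not at hc
          have q1 := mul_le_mul_of_nonneg_left hc h0.le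
          have q2 := mul_le_mul_of_nonneg_right s1 ca
          linarith [kp.1, kp.2, mul_pos hB0 hB0]
      linarith
  have c3 : ∀ q, 0 ≤ wedge (s + (2 : ℝ) • a) (v q - v A) := fun q => by
    rw [wedge_add_left, wedge_smul_left, wedge_swap a]
    have := A0 q
    rcases lt_or_ge 0 (wedge (v q - v A) a) with ca | ca
    · have := (tieA q ca).2
      linarith
    · linarith
  have c4 : ∀ q, wedge (s + (2 : ℝ) • a) (v q - v A') ≤ 0 := fun q => by
    rw [wedge_add_left, wedge_smul_left, wedge_swap a]
    have := A'0 q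
    rcases lt_or_ge (wedge (v q - v A') a) 0 with ca | ca
    · have := tieA' q ca
      linarith
    · linarith
  have s'a : wedge (s + (2 : ℝ) • a) a = h := by
    rw [wedge_add_left, wedge_smul_left, wedge_self]; linarith
  have cand : ∀ i k, v i ≠ v k → wedge (s + (2 : ℝ) • a) (v i - v k) = 0 →
      Cand v h (s + (2 : ℝ) • a) := fun i k hne hw => by
    have hca : wedge (v i - v k) a ≠ 0 := by
      intro h0'
      apply hne
      have : ∀ r, wedge (v i - v k) r = 0 := fun r => by
        have pl := plucker (s + (2 : ℝ) • a) r (v i - v k) a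
        rw [h0', hw, s'a] at pl
        have : h * wedge (v i - v k) r = 0 := by linarith
        exact (mul_eq_zero.1 this).resolve_left h0.ne'
      have t1 := this (1, 0)
      have t2 := this (0, 1)
      simp [wedge] at t1 t2
      exact Prod.ext (by linarith) (by linarith)
    refine ⟨k, i, A, A', hca, eq_of_wedge hca ?_ ?_⟩
    · rw [hw, wedge_smul_left, wedge_self, mul_zero]
    · rw [s'a, wedge_smul_left, ← ha]; field_simp
  refine ⟨s + (2 : ℝ) • a, ⟨?_, ⟨A, A', s'a⟩, ?_⟩, ?_⟩
  · intro i j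
    have k1 := c3 i
    have k2 := c4 j
    have k3 := s'a
    rw [ha] at k1 k2 k3 ⊢
    rw [wedge_sub_right] at k1 k2 ⊢
    rw [wedge_sub_right (v A')] at k3
    linarith
  · intro i j hij U hU hUij
    have k1 := c3 i
    have k2 := c4 j
    have k3 := s'a
    have k4 := hij
    set s' := s + (2 : ℝ) • a with hs'
    rw [ha] at k3
    rw [wedge_sub_right] at k1 k2 k3 k4
    by_cases ei : v i = v A
    · by_cases ej : v j = v A'
      · rw [ei, ej, ← ha] at hUij ⊢
        obtain ⟨z, hz⟩ := g3 A A' sa U hU hUij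
        refine ⟨z - 1, ?_⟩
        rw [hz, hs', ← ha]
        push_cast
        module
      · exact hdiv s' U (cand j A' ej (by rw [wedge_sub_right]; linarith)) hU i j hij hUij
    · exact hdiv s' U (cand i A ei (by rw [wedge_sub_right]; linarith)) hU i j hij hUij
  · rw [step2, step1, ha]; module

lemma exists_mult {ι : Type*} [Fintype ι] (f : ι → ℤ) :
    ∃ Z : ℤ, 0 < Z ∧ ∀ i, f i ≠ 0 → f i ∣ Z := by
  classical
  refine ⟨∏ i, (if f i = 0 then 1 else |f i|), Finset.prod_pos fun i _ => ?_, fun i hi => ?_⟩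
  · split_ifs with h
    · exact one_pos
    · exact abs_pos.2 h
  · refine dvd_trans ?_ (Finset.dvd_prod_of_mem _ (Finset.mem_univ i))
    simp [hi]

/-- Existence of arbitrarily large admissible levels. -/
lemma exists_setup (v : Fin n → ℝ × ℝ) (b₁ b₂ : ℝ × ℝ) (hw : wedge b₁ b₂ ≠ 0)
    (m l : Fin n → ℤ) (hv : ∀ k, v k = (m k : ℝ) • b₁ + (l k : ℝ) • b₂) (R : ℝ) :
    ∃ B h, R ≤ h ∧ Setup v |wedge b₁ b₂| B h := by
  set w := wedge b₁ b₂ with hwd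
  have hD : 0 < |w| := abs_pos.2 hw
  let dd : Fin n × Fin n × Fin n × Fin n → ℤ := fun t =>
    (m t.2.1 - m t.1) * (l t.2.2.2 - l t.2.2.1) - (l t.2.1 - l t.1) * (m t.2.2.2 - m t.2.2.1)
  have hdd : ∀ i j k o, wedge (v j - v i) (v o - v k) = dd (i, j, k, o) * w := by
    intro i j k o
    simp only [hv, dd, hwd, wedge]
    push_cast
    simp
    ring
  obtain ⟨Z1, hZ1, dZ1⟩ := exists_mult dd
  obtain ⟨Z2, hZ2, dZ2⟩ := exists_mult (fun t : Fin n × Fin n => m t.2 - m t.1)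
  obtain ⟨Z3, hZ3, dZ3⟩ := exists_mult (fun t : Fin n × Fin n => l t.2 - l t.1)
  obtain ⟨ε, hε⟩ : ∃ ε : ℤ, (|w| : ℝ) = ε * w := by
    rcases abs_choice w with h | h
    · exact ⟨1, by rw [h]; simp⟩
    · exact ⟨-1, by rw [h]; simp⟩
  obtain ⟨B, hB⟩ : ∃ B : ℝ, |w| ≤ B ∧ ∀ i j k o, |wedge (v j - v i) (v o - v k)| ≤ B := by
    refine ⟨|w| + ∑ t : Fin n × Fin n × Fin n × Fin n,
      |wedge (v t.2.1 - v t.1) (v t.2.2.2 - v t.2.2.1)|, ?_, fun i j k o => ?_⟩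
    · have : 0 ≤ ∑ t : Fin n × Fin n × Fin n × Fin n,
        |wedge (v t.2.1 - v t.1) (v t.2.2.2 - v t.2.2.1)| := Finset.sum_nonneg fun _ _ => abs_nonneg _
      linarith
    · have := Finset.single_le_sum (f := fun t : Fin n × Fin n × Fin n × Fin n =>
        |wedge (v t.2.1 - v t.1) (v t.2.2.2 - v t.2.2.1)|) (fun _ _ => abs_nonneg _)
        (Finset.mem_univ (i, j, k, o))
      simp only at this
      linarith
  obtain ⟨N, hN⟩ := exists_nat_ge ((max R (4 * B * B / |w|) + 1) / |w|)
  have hN' : max R (4 * B * B / |w|) + 1 ≤ N * |w| := (div_le_iff₀ hD).1 hN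
  set H : ℤ := 2 * Z1 * Z2 * Z3 * N with hH
  have hHN : (N : ℝ) ≤ H := by
    have : (N : ℤ) ≤ H := by
      have h1 : 1 ≤ 2 * Z1 * Z2 * Z3 := by
        have : 0 < 2 * Z1 * Z2 * Z3 := by positivity
        omega
      rw [hH]
      exact le_mul_of_one_le_left (by positivity) h1
    exact_mod_cast this
  have hlow : max R (4 * B * B / |w|) + 1 ≤ H * |w| :=
    hN'.trans (mul_le_mul_of_nonneg_right hHN hD.le)
  have hR := le_max_left R (4 * B * B / |w|)
  have hR' := le_max_right R (4 * B * B / |w|)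
  have hq : 4 * B * B / |w| < H * |w| := by linarith
  have hBB : 0 ≤ B * B := mul_self_nonneg B
  have hpos : 0 < H * |w| := lt_of_le_of_lt (div_nonneg (by linarith) hD.le) hq
  refine ⟨B, H * |w|, by linarith, hD, hB.1, ?_, hB.2, (div_lt_iff₀ hD).1 hq, ?_⟩
  · intro i j k o
    refine ⟨dd (i, j, k, o) * ε, ?_⟩
    have hε2 : (ε : ℝ) * ε = 1 := by
      have : (w * w) * ((ε : ℝ) * ε) = (w * w) * 1 := by
        have := abs_mul_abs_self w
        rw [hε] at this
        linarith
      exact mul_left_cancel₀ (mul_ne_zero hw hw) this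
    rw [hdd, hε]
    push_cast
    linear_combination (-(dd (i, j, k, o) : ℝ) * w) * hε2
  · -- candidates are highly divisible lattice vectors
    have hc : ∀ U, Cand v (H * |w|) U → ∃ x y : ℤ,
        U = (2 * Z2 * Z3 * x : ℝ) • b₁ + (2 * Z2 * Z3 * y : ℝ) • b₂ := by
      rintro U ⟨i, j, k, o, hne, rfl⟩
      rw [hdd] at hne ⊢
      have d0 : dd (i, j, k, o) ≠ 0 := by
        intro h
        rw [h] at hne
        simp at hne
      obtain ⟨e, he⟩ := dZ1 _ d0
      refine ⟨ε * N * e * (m j - m i), ε * N * e * (l j - l i), ?_⟩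
      have d0' : (dd (i, j, k, o) : ℝ) ≠ 0 := by exact_mod_cast d0
      have co : (H : ℝ) * |w| / (dd (i, j, k, o) * w) = 2 * Z2 * Z3 * ε * N * e := by
        rw [div_eq_iff (mul_ne_zero d0' hw), hε, hH, he]
        push_cast
        ring
      rw [co, hv, hv]
      push_cast
      module
    intro U U' hU hU' k o hk hk'
    obtain ⟨x, y, rfl⟩ := hc U hU
    obtain ⟨x', y', rfl⟩ := hc U' hU'
    have ev : v o - v k = ((m o - m k : ℤ) : ℝ) • b₁ + ((l o - l k : ℤ) : ℝ) • b₂ := by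
      rw [hv, hv]; push_cast; module
    have wd : ∀ p q r t : ℝ, wedge (p • b₁ + q • b₂) (r • b₁ + t • b₂) = (p * t - q * r) * w := by
      intro p q r t
      rw [hwd]; simp [wedge]; ring
    rw [ev] at hk hk' ⊢
    set p := m o - m k with hp
    set r := l o - l k with hr
    rw [wd] at hk hk'
    have z0 : (2 * Z2 * Z3 : ℝ) ≠ 0 := by
      have h2 : (Z2 : ℝ) ≠ 0 := by exact_mod_cast hZ2.ne'
      have h3 : (Z3 : ℝ) ≠ 0 := by exact_mod_cast hZ3.ne'
      positivity
    have rel : (x' - x) * r = (y' - y) * p := by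
      have : (2 * Z2 * Z3 : ℝ) * (((x' - x) * r - (y' - y) * p) * w) = 0 := by
        linear_combination hk' - hk
      have := (mul_eq_zero.1 ((mul_eq_zero.1 this).resolve_left z0)).resolve_right hw
      have h : ((((x' - x) * r - (y' - y) * p : ℤ)) : ℝ) = 0 := by push_cast; exact this
      have h' : (x' - x) * r - (y' - y) * p = 0 := by exact_mod_cast h
      linarith
    suffices hz : ∃ z : ℤ, z * p = Z2 * Z3 * (x' - x) ∧ z * r = Z2 * Z3 * (y' - y) by
      obtain ⟨z, h1, h2⟩ := hz
      have h1' : (z * p : ℝ) = Z2 * Z3 * (x' - x) := by exact_mod_cast h1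
      have h2' : (z * r : ℝ) = Z2 * Z3 * (y' - y) := by exact_mod_cast h2
      refine ⟨z, ?_⟩
      have e : ∀ α β : ℝ, (2 * z : ℝ) • (α • b₁ + β • b₂)
        = (2 * (z * α)) • b₁ + (2 * (z * β)) • b₂ := by intros; module
      rw [e, h1', h2']
      module
    by_cases p0 : p = 0
    · have r0 : r ≠ 0 := by
        intro h
        rw [p0, h] at hk
        simp at hk
        have : (H : ℝ) * |w| ≠ 0 := hpos.ne'
        rcases hk with hk | hk
        · rw [hk] at this; simp at this
        · exact hw hk
      obtain ⟨e, he⟩ := dZ3 (k, o) r0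
      simp only at he
      rw [← hr] at he
      have hx : x' - x = 0 := by
        rw [p0, mul_zero] at rel
        exact (mul_eq_zero.1 rel).resolve_right r0
      refine ⟨Z2 * e * (y' - y), ?_, ?_⟩
      · rw [p0, hx]; ring
      · rw [he]; ring
    · obtain ⟨e, he⟩ := dZ2 (k, o) p0
      simp only at he
      rw [← hp] at he
      refine ⟨Z3 * e * (x' - x), ?_, ?_⟩
      · rw [he]; ring
      · rw [he]; linear_combination (Z3 * e) * rel

lemma St_det {v : Fin n → ℝ × ℝ} {x y y' : ℝ × ℝ} (hs : St v x y) (hs' : St v x y') :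
    y' = y := by
  obtain ⟨k, h1, h2, e1⟩ := hs
  rw [e1]
  refine St_cone hs' k fun i => ?_
  have e : wedge (x - v k) (v i - v k) = - wedge (v k - x) (v i - x) := by
    simp [wedge]; ring
  have := h1 i
  linarith

/-- Every second point of the orbit has bounded wedge with differences of vertices. -/
lemma orbit_bounded [NeZero n] {v : Fin n → ℝ × ℝ} {D B h : ℝ} (S : Setup v D B h)
    (M : ℕ → ℝ × ℝ) (hs : ∀ k, St v (M k) (M (k + 1)))
    (h0 : ∀ i j, wedge (v i - M 0) (v j - M 0) ≤ h) :
    ∃ m, ∀ i j, ∃ C, ∀ k, |wedge (M (m + 2 * k)) (v j - v i)| ≤ C := by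
  by_cases hall : ∀ k i j, wedge (v i - M k) (v j - M k) ≤ h
  · refine ⟨0, fun i j => ⟨h + |wedge (v i) (v j)|, fun k => ?_⟩⟩
    have a1 := hall (0 + 2 * k) i j
    have a2 := hall (0 + 2 * k) j i
    have e1 : wedge (v i - M (0 + 2 * k)) (v j - M (0 + 2 * k))
      = wedge (v i) (v j) - wedge (M (0 + 2 * k)) (v j - v i) := by simp [wedge]; ring
    have e2 : wedge (v j - M (0 + 2 * k)) (v i - M (0 + 2 * k))
      = - wedge (v i) (v j) + wedge (M (0 + 2 * k)) (v j - v i) := by simp [wedge]; ring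
    rw [e1] at a1
    rw [e2] at a2
    have := le_abs_self (wedge (v i) (v j))
    have := neg_abs_le (wedge (v i) (v j))
    rw [abs_le]
    constructor <;> linarith
  · classical
    have hex : ∃ k, ¬ ∀ i j, wedge (v i - M k) (v j - M k) ≤ h := by
      by_contra hc
      push Not at hc
      exact hall hc
    set m := Nat.find hex with hm
    have hm1 := Nat.find_spec hex
    rw [← hm] at hm1
    have hm0 : m ≠ 0 := by
      intro h'
      rw [h'] at hm1
      exact hm1 h0
    obtain ⟨r, hr⟩ := Nat.exists_eq_succ_of_ne_zero hm0
    have hr1 : ∀ i j, wedge (v i - M r) (v j - M r) ≤ h := by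
      have := Nat.find_min hex (m := r) (by omega)
      exact not_not.1 this
    rw [hr] at hm1
    obtain ⟨s, hG, p, hp, hps⟩ := exit_bead S hr1 (hs r) hm1
    have key : ∀ k, ∃ s, Good v h s ∧ M (r + 1 + 2 * k) = p + s := by
      intro k
      induction k with
      | zero => exact ⟨s, hG, hps⟩
      | succ k ih =>
        obtain ⟨s, hG, e⟩ := ih
        have q1 := hs (r + 1 + 2 * k)
        have q2 := hs (r + 1 + 2 * k + 1)
        rw [e] at q1
        exact bead_step S hG hp q1 q2
    refine ⟨r + 1, fun i j => ⟨h + |wedge p (v j - v i)|, fun k => ?_⟩⟩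
    obtain ⟨s, hG, e⟩ := key k
    have a1 := hG.1 i j
    have a2 := hG.1 j i
    have e2 : wedge s (v i - v j) = - wedge s (v j - v i) := by simp [wedge]; ring
    rw [e2] at a2
    rw [e, wedge_add_left]
    have := le_abs_self (wedge p (v j - v i))
    have := neg_abs_le (wedge p (v j - v i))
    rw [abs_le]
    constructor <;> linarith

/-- A bounded sequence in a coset of a discrete group has finite range. -/
lemma fin_range {D C : ℝ} (hD : 0 < D) (f : ℕ → ℝ) (hi : ∀ k, ∃ z : ℤ, f (k + 1) = f k + z * D)
    (hC : ∀ k, |f k| ≤ C) : (Set.range f).Finite := by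
  have key : ∀ k, ∃ z : ℤ, f k = f 0 + z * D := by
    intro k
    induction k with
    | zero => exact ⟨0, by simp⟩
    | succ k ih =>
      obtain ⟨z, hz⟩ := ih
      obtain ⟨z', hz'⟩ := hi k
      exact ⟨z + z', by rw [hz', hz]; push_cast; ring⟩
  obtain ⟨N, hN⟩ := exists_nat_ge (2 * C / D)
  have hN' : 2 * C ≤ N * D := (div_le_iff₀ hD).1 hN
  refine ((Set.finite_Icc (-(N : ℤ)) N).image fun z : ℤ => f 0 + z * D).subset ?_
  rintro _ ⟨k, rfl⟩
  obtain ⟨z, hz⟩ := key k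
  refine ⟨z, ?_, hz.symm⟩
  have a := abs_le.1 (hC k)
  have b := abs_le.1 (hC 0)
  have z1 : (z : ℝ) * D ≤ N * D := by linarith
  have z2 : (-(N : ℝ)) * D ≤ z * D := by linarith
  have z1' := le_of_mul_le_mul_right z1 hD
  have z2' := le_of_mul_le_mul_right z2 hD
  exact ⟨by exact_mod_cast z2', by exact_mod_cast z1'⟩

lemma periodic_aux [NeZero n] {v : Fin n → ℝ × ℝ} {D B h : ℝ} (S : Setup v D B h)
    (M : ℕ → ℝ × ℝ) (hs : ∀ k, St v (M k) (M (k + 1)))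
    (h0 : ∀ i j, wedge (v i - M 0) (v j - M 0) ≤ h)
    (i j k : Fin n) (hijk : wedge (v j - v i) (v k - v i) ≠ 0) :
    ∃ p : ℕ, 1 ≤ p ∧ M p = M 0 ∧ ∀ k : ℕ, M (k + p) = M k := by
  obtain ⟨m, hm⟩ := orbit_bounded S M hs h0
  have fin : ∀ a b, (Set.range fun t => wedge (M (m + 2 * t)) (v b - v a)).Finite := by
    intro a b
    obtain ⟨C, hC⟩ := hm a b
    refine fin_range S.hD _ (fun t => ?_) hC
    obtain ⟨q, -, -, e1⟩ := hs (m + 2 * t)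
    obtain ⟨q', -, -, e2⟩ := hs (m + 2 * t + 1)
    obtain ⟨z, hz⟩ := S.hInt q q' a b
    refine ⟨2 * z, ?_⟩
    have : M (m + 2 * (t + 1)) = M (m + 2 * t) + (2 : ℝ) • (v q' - v q) := by
      rw [show m + 2 * (t + 1) = m + 2 * t + 1 + 1 by ring, e2, e1]; module
    rw [this, wedge_add_left, wedge_smul_left, hz]
    push_cast; ring
  have fin2 := (fin i j).prod (fin i k)
  obtain ⟨x, -, y, -, hxy, heq⟩ := Set.infinite_univ.exists_ne_map_eq_of_mapsTo
    (f := fun t : ℕ => (wedge (M (m + 2 * t)) (v j - v i), wedge (M (m + 2 * t)) (v k - v i)))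
    (fun t _ => Set.mk_mem_prod (Set.mem_range_self t) (Set.mem_range_self t)) fin2
  have hM : M (m + 2 * x) = M (m + 2 * y) :=
    eq_of_wedge hijk (congrArg Prod.fst heq) (congrArg Prod.snd heq)
  have back : ∀ t a b, M (a + t) = M (b + t) → M a = M b := by
    intro t
    induction t with
    | zero => intro a b h; exact h
    | succ t ih =>
      intro a b h
      refine ih a b ?_
      have q := hs (b + t)
      rw [show b + t + 1 = b + (t + 1) by ring, ← h] at q
      exact St_inj (hs (a + t)) q
  obtain ⟨p, hp1, hp⟩ : ∃ p, 1 ≤ p ∧ M p = M 0 := by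
    rcases lt_or_gt_of_ne hxy with hlt | hlt
    · refine ⟨2 * (y - x), by omega, back (m + 2 * x) _ _ ?_⟩
      rw [show 2 * (y - x) + (m + 2 * x) = m + 2 * y by omega, ← hM, zero_add]
    · refine ⟨2 * (x - y), by omega, back (m + 2 * y) _ _ ?_⟩
      rw [show 2 * (x - y) + (m + 2 * y) = m + 2 * x by omega, hM, zero_add]
  refine ⟨p, hp1, hp, fun k => ?_⟩
  induction k with
  | zero => rw [zero_add, hp]
  | succ k ih =>
    have q := hs (k + p)
    rw [ih] at q
    rw [show k + 1 + p = k + p + 1 by ring]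
    exact St_det (hs k) q

lemma wedge_ne {b₁ b₂ : ℝ × ℝ} (hb : LinearIndependent ℝ ![b₁, b₂]) : wedge b₁ b₂ ≠ 0 := by
  intro h
  rw [LinearIndependent.pair_iff] at hb
  simp only [wedge] at h
  have h1 := hb b₂.2 (-b₁.2) (by ext <;> simp <;> linarith)
  have h2 := hb b₂.1 (-b₁.1) (by ext <;> simp <;> linarith)
  have h3 := hb 1 0 (by ext <;> simp <;> linarith [h1.2, h2.2])
  exact one_ne_zero h3.1

end OBAux
/-- If `P` is a rational convex polygon without parallel edges, then every
forward orbit of the outer billiard map about `P` is periodic. -/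
theorem rational_orbit_periodic {n : ℕ} [NeZero n] (P : ConvexPolygonSpokes n)
    (hrat : P.Rational) (M : ℕ → ℝ × ℝ) (hM : P.IsOrbit M) :
    ∃ p : ℕ, 1 ≤ p ∧ M p = M 0 ∧ ∀ k : ℕ, M (k + p) = M k := by
  obtain ⟨b₁, b₂, hb, hv⟩ := hrat
  choose m l hv using hv
  have hs : ∀ k, OBAux.St P.vertex (M k) (M (k + 1)) := by
    intro k
    obtain ⟨-, a, h1, h2, e⟩ := hM k
    have mem : ∀ i, P.vertex i ∈ P.polygon := fun i => subset_convexHull ℝ _ ⟨i, rfl⟩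
    exact ⟨a, fun i => h1 _ (mem i), fun i => h2 _ (mem i), e⟩
  obtain ⟨B, h, hR, S⟩ := OBAux.exists_setup P.vertex b₁ b₂ (OBAux.wedge_ne hb) m l hv
    (∑ t : Fin n × Fin n, |wedge (P.vertex t.1 - M 0) (P.vertex t.2 - M 0)|)
  have h0 : ∀ i j, wedge (P.vertex i - M 0) (P.vertex j - M 0) ≤ h := by
    intro i j
    have := Finset.single_le_sum (f := fun t : Fin n × Fin n =>
        |wedge (P.vertex t.1 - M 0) (P.vertex t.2 - M 0)|) (fun _ _ => abs_nonneg _)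
        (Finset.mem_univ (i, j))
    exact (le_abs_self _).trans (this.trans hR)
  have h3 := P.three_le
  obtain ⟨j, hj⟩ : ∃ j : Fin n, j ∉ ({0, 0 + 1} : Finset (Fin n)) := by
    by_contra hc
    push Not at hc
    have h1 : Finset.univ ⊆ ({0, 0 + 1} : Finset (Fin n)) := fun x _ => hc x
    have h2 := Finset.card_le_card h1
    have h4 := Finset.card_le_two (a := (0 : Fin n)) (b := 0 + 1)
    rw [Finset.card_univ, Fintype.card_fin] at h2
    omega
  simp only [Finset.mem_insert, Finset.mem_singleton, not_or] at hj
  exact OBAux.periodic_aux S M hs h0 0 (0 + 1) j (P.convex_ccw 0 j hj.1 hj.2).ne'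
end

section
/- For every i, the intersection Σ_i ∩ Σ_{i+1} of two consecutive strips is a (nondegenerate) parallelogram, one of whose diagonals is a translate of the segment from v_i to w_i and one of whose sides is a translate of d_i/2, and its Lebesgue area equals |a_i ∧ d_i| / 4. -/
open MeasureTheory

theorem lineAngle_spec (u : ℝ × ℝ) (hu : u ≠ 0) : 0 ≤ lineAngle u ∧ lineAngle u < Real.pi ∧
    ∃ r : ℝ, r ≠ 0 ∧ u.1 = r * Real.cos (lineAngle u) ∧ u.2 = r * Real.sin (lineAngle u) := by
  have hz : (⟨u.1, u.2⟩ : ℂ) ≠ 0 := by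
    intro h
    apply hu
    have h1 := congrArg Complex.re h
    have h2 := congrArg Complex.im h
    simp at h1 h2
    exact Prod.ext h1 h2
  have hn : ‖(⟨u.1, u.2⟩ : ℂ)‖ ≠ 0 := by simpa using hz
  have hc := Complex.norm_mul_cos_arg (⟨u.1, u.2⟩ : ℂ)
  have hs := Complex.norm_mul_sin_arg (⟨u.1, u.2⟩ : ℂ)
  have hl := Complex.neg_pi_lt_arg (⟨u.1, u.2⟩ : ℂ)
  have hg := Complex.arg_le_pi (⟨u.1, u.2⟩ : ℂ)
  have hpi := Real.pi_pos
  unfold lineAngle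
  simp only
  generalize Complex.arg (⟨u.1, u.2⟩ : ℂ) = θ at *
  generalize ‖(⟨u.1, u.2⟩ : ℂ)‖ = r at *
  simp only at hc hs
  split_ifs with h1 h2
  · refine ⟨by linarith, by linarith, -r, by simpa using hn, ?_, ?_⟩
    · rw [Real.cos_add_pi]; linarith
    · rw [Real.sin_add_pi]; linarith
  · subst h2
    refine ⟨le_refl _, hpi, -r, by simpa using hn, ?_, ?_⟩
    · simp at hc ⊢; linarith
    · simp at hs ⊢; linarith
  · refine ⟨by linarith, lt_of_le_of_ne hg h2, r, hn, hc.symm, hs.symm⟩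

theorem wedge_polar {u v : ℝ × ℝ} {r s θ φ : ℝ} (h1 : u.1 = r * Real.cos θ)
    (h2 : u.2 = r * Real.sin θ) (h3 : v.1 = s * Real.cos φ) (h4 : v.2 = s * Real.sin φ) :
    wedge u v = r * s * Real.sin (φ - θ) := by
  unfold wedge
  rw [h1, h2, h3, h4, Real.sin_sub]; ring

theorem cone_nonneg (F p q x : ℝ × ℝ) (hpq : 0 < wedge p q) (h1 : 0 ≤ wedge p x)
    (h2 : 0 ≤ wedge x q) (h3 : 0 ≤ wedge F p) (h4 : 0 ≤ wedge F q) : 0 ≤ wedge F x := by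
  have key : wedge p q * wedge F x = wedge x q * wedge F p + wedge p x * wedge F q := by
    unfold wedge; ring
  have : 0 ≤ wedge p q * wedge F x := by rw [key]; positivity
  exact nonneg_of_mul_nonneg_right this hpq

theorem volume_par (z u u' : ℝ × ℝ) :
    (volume {p : ℝ × ℝ | ∃ s t : ℝ, s ∈ Set.Icc (0 : ℝ) 1 ∧ t ∈ Set.Icc (0 : ℝ) 1 ∧
          p = z + s • u + t • u'}).toReal = |wedge u u'| := by
  let L : (ℝ × ℝ) →ₗ[ℝ] (ℝ × ℝ) :=
    (LinearMap.fst ℝ ℝ ℝ).smulRight u + (LinearMap.snd ℝ ℝ ℝ).smulRight u'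
  have hL : ∀ x, L x = x.1 • u + x.2 • u' := fun x => by simp [L]
  have hdet : LinearMap.det L = wedge u u' := by
    rw [← LinearMap.det_toMatrix (Module.Basis.finTwoProd ℝ), Matrix.det_fin_two]
    simp [LinearMap.toMatrix_apply, hL, wedge]
    ring
  have hS : {p : ℝ × ℝ | ∃ s t : ℝ, s ∈ Set.Icc (0 : ℝ) 1 ∧ t ∈ Set.Icc (0 : ℝ) 1 ∧
          p = z + s • u + t • u'} =
      (fun x => z + x) '' (L '' (Set.Icc (0 : ℝ) 1 ×ˢ Set.Icc (0 : ℝ) 1)) := by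
    ext p
    constructor
    · rintro ⟨s, t, hs, ht, rfl⟩
      exact ⟨s • u + t • u', ⟨(s, t), ⟨hs, ht⟩, hL _⟩, by simp [add_assoc]⟩
    · rintro ⟨_, ⟨⟨s, t⟩, ⟨hs, ht⟩, rfl⟩, rfl⟩
      exact ⟨s, t, hs, ht, by simp [hL, add_assoc]⟩
  rw [hS, Set.image_add_left, measure_preimage_add, Measure.addHaar_image_linearMap, hdet,
    Measure.volume_eq_prod, Measure.prod_prod]
  simp

namespace ConvexPolygonSpokes

variable {n : ℕ} [NeZero n] (P : ConvexPolygonSpokes n)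

theorem fin_ne (m : Fin n) (hn : 3 ≤ n) : m + 1 ≠ m ∧ m - 1 ≠ m ∧ m - 1 ≠ m + 1 := by
  obtain ⟨k, rfl⟩ : ∃ k, n = k + 3 := ⟨n - 3, by omega⟩
  have h1 : (1 : Fin (k+3)) ≠ 0 := by simp
  have h2 : (1 : Fin (k+3)) + 1 ≠ 0 := by
    intro h
    have := congrArg Fin.val h
    rw [Fin.val_add] at this
    simp at this
    rw [Nat.mod_eq_of_lt (by omega)] at this
    omega
  refine ⟨by simp, by simp, ?_⟩
  intro h
  apply h2
  have : m + 1 + 1 = m := by rw [← h]; simp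
  rw [add_assoc] at this
  simpa using this

theorem ccw_le (m k : Fin n) :
    0 ≤ wedge (P.vertex (m + 1) - P.vertex m) (P.vertex k - P.vertex m) := by
  by_cases h1 : k = m
  · subst h1; simp [wedge]
  by_cases h2 : k = m + 1
  · subst h2; unfold wedge; apply le_of_eq; ring
  exact (P.convex_ccw m k h1 h2).le

/-- local minimum of a linear functional is a global minimum -/
theorem local_min (F : ℝ × ℝ) (m k : Fin n)
    (h1 : 0 ≤ wedge F (P.vertex (m + 1) - P.vertex m))
    (h2 : 0 ≤ wedge F (P.vertex (m - 1) - P.vertex m)) :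
    0 ≤ wedge F (P.vertex k - P.vertex m) := by
  obtain ⟨a1, a2, a3⟩ := fin_ne m P.three_le
  refine cone_nonneg F _ _ _ (P.convex_ccw m (m-1) a2 a3) (P.ccw_le m k) ?_ h1 h2
  have := P.ccw_le (m-1) k
  rw [sub_add_cancel] at this
  unfold wedge at *
  simp only [Prod.fst_sub, Prod.snd_sub] at *
  linarith

theorem dir_ne (j : Fin n) : P.dir j ≠ 0 := by
  intro h
  obtain ⟨a1, a2, a3⟩ := fin_ne (P.σ j) P.three_le
  have := P.convex_ccw (P.σ j) (P.σ j - 1) a2 a3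
  unfold dir at h
  rw [h] at this
  simp [wedge] at this

/-- no edge direction lies strictly between two consecutive slopes -/
theorem between (i j : Fin n) :
    wedge (P.dir i) (P.dir j) * wedge (P.dir j) (P.dir (i + 1)) *
      wedge (P.dir i) (P.dir (i + 1)) ≤ 0 := by
  have hmono : ∀ x y : Fin n, x < y → lineAngle (P.dir x) < lineAngle (P.dir y) :=
    fun x y h => P.slope_sorted h
  obtain ⟨i0, i1, r, hr, ia, ib⟩ := lineAngle_spec _ (P.dir_ne i)
  obtain ⟨j0, j1, s, hs, ja, jb⟩ := lineAngle_spec _ (P.dir_ne j)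
  obtain ⟨k0, k1, t, ht, ka, kb⟩ := lineAngle_spec _ (P.dir_ne (i + 1))
  rw [wedge_polar ia ib ja jb, wedge_polar ja jb ka kb, wedge_polar ia ib ka kb]
  have pos : ∀ x y : Fin n, x < y →
      0 < Real.sin (lineAngle (P.dir y) - lineAngle (P.dir x)) := by
    intro x y h
    have := hmono x y h
    have hx := (lineAngle_spec _ (P.dir_ne x)).1
    have hy := (lineAngle_spec _ (P.dir_ne y)).2.1
    exact Real.sin_pos_of_pos_of_lt_pi (by linarith) (by linarith)
  have neg : ∀ x y : Fin n, x < y →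
      Real.sin (lineAngle (P.dir x) - lineAngle (P.dir y)) < 0 := by
    intro x y h
    have := pos x y h
    rw [← neg_sub, Real.sin_neg]; linarith
  have key : Real.sin (lineAngle (P.dir j) - lineAngle (P.dir i)) *
      Real.sin (lineAngle (P.dir (i + 1)) - lineAngle (P.dir j)) *
      Real.sin (lineAngle (P.dir (i + 1)) - lineAngle (P.dir i)) ≤ 0 := by
    by_cases hji : j = i
    · subst hji; simp
    by_cases hjk : j = i + 1
    · subst hjk; simp
    have hv : (i.val + 1 < n ∧ (i + 1).val = i.val + 1) ∨ (i.val + 1 = n ∧ (i + 1).val = 0) := by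
      have h3 := P.three_le
      have h1 : (1 : Fin n).val = 1 := by
        rw [Fin.val_one']; exact Nat.mod_eq_of_lt (by omega)
      rcases Nat.lt_or_ge (i.val + 1) n with h | h
      · left; refine ⟨h, ?_⟩
        rw [Fin.val_add, h1]; exact Nat.mod_eq_of_lt h
      · right
        have : i.val + 1 = n := by omega
        refine ⟨this, ?_⟩
        rw [Fin.val_add, h1, this, Nat.mod_self]
    have hji' : j.val ≠ i.val := fun h => hji (Fin.ext h)
    have hjk' : j.val ≠ (i + 1).val := fun h => hjk (Fin.ext h)
    have hjn := j.isLt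
    have h3 := P.three_le
    rcases hv with ⟨_, hv⟩ | ⟨hv0, hv⟩
    · have c := pos i (i + 1) (by rw [Fin.lt_def]; omega)
      rcases Nat.lt_or_ge j.val i.val with h | h
      · have a := neg j i (by rw [Fin.lt_def]; omega)
        have b := pos j (i + 1) (by rw [Fin.lt_def]; omega)
        exact (mul_neg_of_neg_of_pos (mul_neg_of_neg_of_pos a b) c).le
      · have a := pos i j (by rw [Fin.lt_def]; omega)
        have b := neg (i + 1) j (by rw [Fin.lt_def]; omega)
        exact (mul_neg_of_neg_of_pos (mul_neg_of_pos_of_neg a b) c).le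
    · have c := neg (i + 1) i (by rw [Fin.lt_def]; omega)
      have a := neg j i (by rw [Fin.lt_def]; omega)
      have b := neg (i + 1) j (by rw [Fin.lt_def]; omega)
      exact (mul_neg_of_pos_of_neg (mul_pos_of_neg_of_neg a b) c).le
  have : 0 ≤ (r * s * t) ^ 2 := sq_nonneg _
  calc _ = (r * s * t) ^ 2 * (Real.sin (lineAngle (P.dir j) - lineAngle (P.dir i)) *
      Real.sin (lineAngle (P.dir (i + 1)) - lineAngle (P.dir j)) *
      Real.sin (lineAngle (P.dir (i + 1)) - lineAngle (P.dir i))) := by ring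
    _ ≤ 0 := mul_nonpos_of_nonneg_of_nonpos this key

theorem between' (i m : Fin n) (F : ℝ × ℝ) (ε : ℝ) (hF : F = ε • P.dir (i + 1))
    (hε : 0 < wedge (P.dir i) F) :
    wedge (P.dir i) (P.vertex (m + 1) - P.vertex m) *
      wedge (P.vertex (m + 1) - P.vertex m) F ≤ 0 := by
  have h := P.between i (P.σ.symm m)
  have hd : P.dir (P.σ.symm m) = P.vertex (m + 1) - P.vertex m := by simp [dir]
  rw [hd] at h
  generalize P.vertex (m + 1) - P.vertex m = E at *
  have e1 : wedge E F = ε * wedge E (P.dir (i + 1)) := by rw [hF]; simp [wedge]; ring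
  have e2 : wedge (P.dir i) F = ε * wedge (P.dir i) (P.dir (i + 1)) := by
    rw [hF]; simp [wedge]; ring
  have : (wedge (P.dir i) E * wedge E F) * wedge (P.dir i) F ≤ 0 := by
    rw [e1, e2]
    have := mul_nonpos_of_nonneg_of_nonpos (sq_nonneg ε) h
    nlinarith [this]
  exact nonpos_of_mul_nonpos_left this hε

theorem w_pos (i : Fin n) : 0 < wedge (P.dir i) (P.w i - P.vertex (P.σ i)) := by
  refine lt_of_le_of_ne (P.ccw_le (P.σ i) (P.wIdx i)) ?_
  intro h
  obtain ⟨a1, a2, a3⟩ := fin_ne (P.σ i) P.three_le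
  have h1 := P.wIdx_farthest i
  unfold dir w at h
  rw [← h] at h1
  by_cases hw : P.wIdx i = P.σ i
  · have := h1 (P.σ i + 1) (by rw [hw]; exact a1)
    rw [abs_zero] at this
    exact absurd this (not_lt.mpr (abs_nonneg _))
  · have := h1 (P.σ i) (Ne.symm hw)
    rw [abs_zero] at this
    exact absurd this (not_lt.mpr (abs_nonneg _))

theorem w_max (i k : Fin n) :
    wedge (P.dir i) (P.vertex k - P.vertex (P.σ i)) ≤
      wedge (P.dir i) (P.w i - P.vertex (P.σ i)) := by
  by_cases h : k = P.wIdx i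
  · subst h; exact le_refl _
  have := P.wIdx_farthest i k h
  rw [abs_of_nonneg (P.ccw_le _ _), abs_of_nonneg (P.ccw_le _ _)] at this
  exact this.le

theorem w_lt (i k : Fin n) (h : k ≠ P.wIdx i) :
    wedge (P.dir i) (P.vertex k - P.w i) < 0 := by
  have := P.wIdx_farthest i k h
  rw [abs_of_nonneg (P.ccw_le _ _), abs_of_nonneg (P.ccw_le _ _)] at this
  unfold dir w wedge at *
  simp only [Prod.fst_sub, Prod.snd_sub] at *
  linarith

theorem wedge_smul_left (c : ℝ) (x y : ℝ × ℝ) : wedge (c • x) y = c * wedge x y := by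
  simp [wedge]; ring

/-- `v i` minimises and `w i` maximises the functional of the next slope -/
theorem v_min (i k : Fin n) (F : ℝ × ℝ) (ε : ℝ) (hF : F = ε • P.dir (i + 1))
    (hε : 0 < wedge (P.dir i) F) : 0 ≤ wedge F (P.vertex k - P.v i) := by
  obtain ⟨a1, a2, a3⟩ := fin_ne (P.σ i + 1) P.three_le
  obtain ⟨b1, b2, b3⟩ := fin_ne (P.σ i) P.three_le
  have hd : P.dir i = P.vertex (P.σ i + 1) - P.vertex (P.σ i) := rfl
  refine P.local_min F (P.σ i + 1) k ?_ ?_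
  · have h1 := P.between' i (P.σ i + 1) F ε hF hε
    rw [add_sub_cancel_right] at a3
    have h2 := P.convex_ccw (P.σ i) (P.σ i + 1 + 1) a3.symm a1
    have h3 : 0 < wedge (P.dir i) (P.vertex (P.σ i + 1 + 1) - P.vertex (P.σ i + 1)) := by
      rw [hd]
      unfold wedge at *
      simp only [Prod.fst_sub, Prod.snd_sub] at *
      linarith
    have h4 := nonpos_of_mul_nonpos_right h1 h3
    unfold wedge at *
    linarith
  · rw [add_sub_cancel_right]
    rw [hd] at hε
    unfold wedge at *
    simp only [Prod.fst_sub, Prod.snd_sub] at *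
    linarith

theorem w_max' (i k : Fin n) (F : ℝ × ℝ) (ε : ℝ) (hF : F = ε • P.dir (i + 1))
    (hε : 0 < wedge (P.dir i) F) : wedge F (P.vertex k - P.w i) ≤ 0 := by
  obtain ⟨a1, a2, a3⟩ := fin_ne (P.wIdx i) P.three_le
  have key : 0 ≤ wedge ((-1 : ℝ) • F) (P.vertex k - P.w i) := by
    refine P.local_min ((-1 : ℝ) • F) (P.wIdx i) k ?_ ?_
    · have h1 := P.between' i (P.wIdx i) F ε hF hε
      have h3 : wedge (P.dir i) (P.vertex (P.wIdx i + 1) - P.vertex (P.wIdx i)) < 0 :=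
        P.w_lt i _ a1
      have h4 := nonneg_of_mul_nonpos_right h1 h3
      rw [wedge_smul_left]
      unfold wedge at *
      linarith
    · have h1 := P.between' i (P.wIdx i - 1) F ε hF hε
      have h3 : wedge (P.dir i) (P.vertex (P.wIdx i - 1) - P.vertex (P.wIdx i)) < 0 :=
        P.w_lt i _ a2
      rw [sub_add_cancel] at h1
      have h3' : 0 < wedge (P.dir i) (P.vertex (P.wIdx i) - P.vertex (P.wIdx i - 1)) := by
        unfold wedge at *
        simp only [Prod.fst_sub, Prod.snd_sub] at *
        linarith
      have h4 := nonpos_of_mul_nonpos_right h1 h3'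
      rw [wedge_smul_left]
      unfold wedge at *
      simp only [Prod.fst_sub, Prod.snd_sub] at *
      linarith
  rw [wedge_smul_left] at key
  linarith

theorem wedge_sub (x p q : ℝ × ℝ) : wedge x (p - q) = wedge x p - wedge x q := by
  simp [wedge]; ring

theorem consec (i : Fin n) : wedge (P.dir i) (P.dir (i + 1)) ≠ 0 := by
  refine P.no_parallel _ _ ?_
  intro h
  exact (fin_ne i P.three_le).1 (P.σ.injective h).symm

theorem strip_self (i : Fin n) (p : ℝ × ℝ) : p ∈ P.strip i ↔
    0 ≤ wedge (P.dir i) (p - P.v i) ∧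
      wedge (P.dir i) (p - P.v i) ≤ wedge (P.dir i) (P.w i - P.v i) := by
  have h : wedge (P.dir i) (P.v i) = wedge (P.dir i) (P.vertex (P.σ i)) := by
    unfold dir v wedge
    simp only [Prod.fst_sub, Prod.snd_sub]
    ring
  simp only [strip, Set.mem_ofPred_eq, wedge_sub, h]

theorem delta_pos (i : Fin n) : 0 < wedge (P.dir i) (P.w i - P.v i) := by
  have h : wedge (P.dir i) (P.v i) = wedge (P.dir i) (P.vertex (P.σ i)) := by
    unfold dir v wedge
    simp only [Prod.fst_sub, Prod.snd_sub]
    ring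
  have := P.w_pos i
  rw [wedge_sub] at *
  rwa [h]

theorem strip_next (i : Fin n) :
    (0 < wedge (P.dir (i + 1)) (P.w i - P.v i) ∧ ∀ p, p ∈ P.strip (i + 1) ↔
      0 ≤ wedge (P.dir (i + 1)) (p - P.v i) ∧
      wedge (P.dir (i + 1)) (p - P.v i) ≤ wedge (P.dir (i + 1)) (P.w i - P.v i)) ∨
    (wedge (P.dir (i + 1)) (P.w i - P.v i) < 0 ∧ ∀ p, p ∈ P.strip (i + 1) ↔
      wedge (P.dir (i + 1)) (p - P.v i) ≤ 0 ∧
      wedge (P.dir (i + 1)) (P.w i - P.v i) ≤ wedge (P.dir (i + 1)) (p - P.v i)) := by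
  have hv0 := P.ccw_le (P.σ (i + 1)) (P.σ i + 1)
  have hw0 := P.ccw_le (P.σ (i + 1)) (P.wIdx i)
  have hv1 := P.w_max (i + 1) (P.σ i + 1)
  have hw1 := P.w_max (i + 1) (P.wIdx i)
  have hp := P.w_pos (i + 1)
  change 0 ≤ wedge (P.dir (i + 1)) (P.v i - _) at hv0
  change 0 ≤ wedge (P.dir (i + 1)) (P.w i - _) at hw0
  change wedge (P.dir (i + 1)) (P.v i - _) ≤ _ at hv1
  change wedge (P.dir (i + 1)) (P.w i - _) ≤ _ at hw1
  rcases lt_or_gt_of_ne (P.consec i) with h | h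
  · right
    have hε : 0 < wedge (P.dir i) ((-1 : ℝ) • P.dir (i + 1)) := by
      have : wedge (P.dir i) ((-1 : ℝ) • P.dir (i + 1)) =
        - wedge (P.dir i) (P.dir (i + 1)) := by simp [wedge]; ring
      rw [this]; linarith
    have h1 := P.v_min i (P.wIdx (i + 1)) _ _ rfl hε
    have h2 := P.w_max' i (P.σ (i + 1)) _ _ rfl hε
    change 0 ≤ wedge _ (P.w (i + 1) - _) at h1
    rw [wedge_smul_left] at h1 h2
    simp only [strip, Set.mem_ofPred_eq, wedge_sub] at *
    refine ⟨by linarith, fun p => ?_⟩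
    constructor
    · rintro ⟨x, y⟩; constructor <;> linarith
    · rintro ⟨x, y⟩; constructor <;> linarith
  · left
    have hε : 0 < wedge (P.dir i) ((1 : ℝ) • P.dir (i + 1)) := by rwa [one_smul]
    have h1 := P.v_min i (P.σ (i + 1)) _ _ rfl hε
    have h2 := P.w_max' i (P.wIdx (i + 1)) _ _ rfl hε
    change wedge _ (P.w (i + 1) - _) ≤ 0 at h2
    rw [wedge_smul_left] at h1 h2
    simp only [strip, Set.mem_ofPred_eq, wedge_sub] at *
    refine ⟨by linarith, fun p => ?_⟩
    constructor
    · rintro ⟨x, y⟩; constructor <;> linarith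
    · rintro ⟨x, y⟩; constructor <;> linarith

end ConvexPolygonSpokes

theorem li_of_wedge (u u' : ℝ × ℝ) (h : wedge u u' ≠ 0) : LinearIndependent ℝ ![u, u'] := by
  rw [LinearIndependent.pair_iff]
  intro s t hst
  have h1 := congrArg Prod.fst hst
  have h2 := congrArg Prod.snd hst
  simp at h1 h2
  unfold wedge at h
  constructor
  · apply (mul_eq_zero.mp _).resolve_right h
    linear_combination u'.2 * h1 - u'.1 * h2
  · apply (mul_eq_zero.mp _).resolve_right h
    linear_combination u.1 * h2 - u.2 * h1

/-- the intersection of two consecutive strips is a nondegenerate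
parallelogram, one of whose diagonals is a translate of the segment from `v i` to `w i`
and one of whose sides is a translate of `d i / 2`, and its Lebesgue area is
`|a i ∧ d i| / 4`. -/
theorem strip_inter_parallelogram {n : ℕ} [NeZero n] (P : ConvexPolygonSpokes n)
    (i : Fin n) :
    (∃ z u u' : ℝ × ℝ, LinearIndependent ℝ ![u, u'] ∧
      P.strip i ∩ P.strip (i + 1) =
        {p : ℝ × ℝ | ∃ s t : ℝ, s ∈ Set.Icc (0 : ℝ) 1 ∧ t ∈ Set.Icc (0 : ℝ) 1 ∧
          p = z + s • u + t • u'} ∧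
      u + u' = P.w i - P.v i ∧
      (u = (2⁻¹ : ℝ) • P.d i ∨ u = -((2⁻¹ : ℝ) • P.d i) ∨
        u' = (2⁻¹ : ℝ) • P.d i ∨ u' = -((2⁻¹ : ℝ) • P.d i))) ∧
    (MeasureTheory.volume (P.strip i ∩ P.strip (i + 1))).toReal
      = |wedge (P.a i) (P.d i)| / 4 := by
  have hc := P.consec i
  have hh := P.delta_pos i
  have hs := P.strip_self i
  have hn := P.strip_next i
  have hd : P.d i = (-(2 * wedge (P.dir (i + 1)) (P.w i - P.v i)) /
      wedge (P.dir (i + 1)) (P.dir i)) • P.dir i := by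
    unfold ConvexPolygonSpokes.d ConvexPolygonSpokes.a
    congr 3
    simp [wedge]; ring
  have ha : P.a i = (2 : ℝ) • (P.w i - P.v i) := rfl
  rw [hd, ha]
  generalize P.dir i = D at *
  generalize P.dir (i + 1) = D' at *
  generalize P.w i - P.v i = δ at *
  generalize P.v i = v at *
  have hc' : wedge D' D = - wedge D D' := by unfold wedge; ring
  have hk' : wedge D' δ ≠ 0 := by
    rcases hn with ⟨h, _⟩ | ⟨h, _⟩
    · exact h.ne'
    · exact h.ne
  rw [hc']
  obtain ⟨c, hcd⟩ : ∃ c, c = wedge D D' := ⟨_, rfl⟩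
  obtain ⟨k, hk⟩ : ∃ k, k = wedge D δ := ⟨_, rfl⟩
  obtain ⟨k', hkd⟩ : ∃ k', k' = wedge D' δ := ⟨_, rfl⟩
  have hS : P.strip i ∩ P.strip (i + 1) =
        {p : ℝ × ℝ | ∃ s t : ℝ, s ∈ Set.Icc (0 : ℝ) 1 ∧ t ∈ Set.Icc (0 : ℝ) 1 ∧
          p = v + s • ((-k' / c) • D) + t • ((k / c) • D')} := by
    ext p
    have hsn : p ∈ P.strip (i + 1) ↔ wedge D' (p - v) / k' ∈ Set.Icc (0 : ℝ) 1 := by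
      rw [Set.mem_Icc]
      rcases hn with ⟨h, h2⟩ | ⟨h, h2⟩
      · rw [h2, hkd, le_div_iff₀ h, div_le_iff₀ h, zero_mul, one_mul]
      · rw [h2, hkd, le_div_iff_of_neg h, div_le_iff_of_neg h, zero_mul, one_mul]
    have hss : p ∈ P.strip i ↔ wedge D (p - v) / k ∈ Set.Icc (0 : ℝ) 1 := by
      rw [Set.mem_Icc, hs, hk, le_div_iff₀ hh, div_le_iff₀ hh, zero_mul, one_mul]
    rw [Set.mem_inter_iff, hsn, hss, Set.mem_ofPred_eq]
    rw [← hcd] at hc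
    rw [← hkd] at hk'
    have hk0 : k ≠ 0 := by rw [hk]; exact hh.ne'
    constructor
    · rintro ⟨h1, h2⟩
      refine ⟨_, _, h2, h1, ?_⟩
      have e1 : wedge D' (p - v) / k' * (-k' / c) = - wedge D' (p - v) / c := by field_simp
      have e2 : wedge D (p - v) / k * (k / c) = wedge D (p - v) / c := by field_simp
      rw [smul_smul, smul_smul, e1, e2]
      ext
      · simp only [Prod.fst_add, Prod.smul_fst, smul_eq_mul]
        field_simp
        rw [hcd]; simp only [wedge, Prod.fst_sub, Prod.snd_sub]; ring
      · simp only [Prod.snd_add, Prod.smul_snd, smul_eq_mul]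
        field_simp
        rw [hcd]; simp only [wedge, Prod.fst_sub, Prod.snd_sub]; ring
    · rintro ⟨s, t, h1, h2, rfl⟩
      have e1 : wedge D (v + s • ((-k' / c) • D) + t • ((k / c) • D') - v) = t * k / c * wedge D D' := by
        simp [wedge]; ring
      have e2 : wedge D' (v + s • ((-k' / c) • D) + t • ((k / c) • D') - v) = s * k' / c * wedge D D' := by
        simp [wedge]; ring
      rw [e1, e2, ← hcd, div_mul_cancel₀ _ hc, div_mul_cancel₀ _ hc, mul_div_cancel_right₀ _ hk0,
        mul_div_cancel_right₀ _ hk']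
      exact ⟨h2, h1⟩
  have hsum : (-k' / c) • D + (k / c) • D' = δ := by
    rw [← hcd] at hc
    ext
    · simp only [Prod.fst_add, Prod.smul_fst, smul_eq_mul]
      field_simp
      rw [hcd, hk, hkd]; simp only [wedge]; ring
    · simp only [Prod.snd_add, Prod.smul_snd, smul_eq_mul]
      field_simp
      rw [hcd, hk, hkd]; simp only [wedge]; ring
  have hw : wedge ((-k' / c) • D) ((k / c) • D') = (-k' / c) * (k / c) * wedge D D' := by
    simp [wedge]; ring
  rw [← hcd, ← hkd]
  rw [← hcd] at hc hw
  rw [← hkd] at hk'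
  have hk0 : k ≠ 0 := by rw [hk]; exact hh.ne'
  refine ⟨⟨v, (-k' / c) • D, (k / c) • D', ?_, hS, hsum, Or.inr (Or.inl ?_)⟩, ?_⟩
  · apply li_of_wedge
    rw [hw]
    exact mul_ne_zero (mul_ne_zero (div_ne_zero (neg_ne_zero.mpr hk') hc)
      (div_ne_zero hk0 hc)) hc
  · rw [smul_smul, ← neg_smul]
    congr 1
    field_simp
  · rw [hS, volume_par, hw]
    have : wedge ((2 : ℝ) • δ) ((-(2 * k') / -c) • D) = 4 * ((-k' / c) * (k / c) * c) := by
      have : wedge ((2 : ℝ) • δ) ((-(2 * k') / -c) • D) = 2 * (-(2 * k') / -c) * (-k) := by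
        rw [hk]; simp [wedge]; ring
      rw [this]
      field_simp
      ring
    rw [this, abs_mul 4, abs_of_pos (by norm_num : (0 : ℝ) < 4)]
    ring
end
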